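/- Let α ∈ (0,1), r, μ_d ∈ ℝ, σ > 0, σ̂ > 0, μ̂ ∈ ℝ, λ > 0, p ∈ [0,1] and ρ ∈ (−1,1). Set c = μ̂ − σ̂²/2, U(x) = x^{1−α}/(1−α) and η(x) = exp(σ̂x + c) − 1. Then the constant M := sup_{φ∈[0,1]} { φ(μ_d − r) − (1/2)αφ²σ² + λ(1−p) ∫_ℝ (U(1 + φη(x)) − U(1)) N_{0,1}(dx) } + λp ∫_ℝ [ sup_{φ∈[0,1]} ∫_ℝ (U(1 + φη(y)) − U(1)) N_{ρz, 1−ρ²}(dy) ] N_{0,1}(dz) is a finite real number. -/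

import Mathlib

open MeasureTheory ProbabilityTheory Real
open scoped NNReal

/-- The power utility function `U(x) = x^(1-α)/(1-α)` (real power). -/
noncomputable def U (α x : ℝ) : ℝ := x ^ (1 - α) / (1 - α)

/-!
Between `φ = 0` and `φ = 1` the post-jump wealth `1 + φ (e ^ y - 1)` stays between `1` and `e ^ y`,
so for an increasing utility the gain from a jump is dominated, uniformly in `φ`, by the gain of the
fully invested position, and both suprema are finite as soon as `u ∘ exp` is integrable under every
Gaussian law. The optimal gain is measurable in the posterior mean because it is monotone in it, and
its dominating function is integrable in the signal because averaging Gaussian posteriors over a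
Gaussian signal gives a Gaussian again.
-/

section Gaussian

variable {m c s : ℝ} {v : ℝ≥0} {f : ℝ → ℝ}

lemma map_affine_gaussianReal (m c s : ℝ) (v : ℝ≥0) :
    (gaussianReal m v).map (fun x => s * x + c) =
      gaussianReal (s * m + c) (.mk (s ^ 2) (sq_nonneg s) * v) := by
  rw [← gaussianReal_map_add_const c, ← gaussianReal_map_const_mul s,
    Measure.map_map (by fun_prop) (by fun_prop)]
  rfl

lemma integrable_comp_affine_gaussianReal_iff (hf : Measurable f) :
    Integrable (fun x => f (s * x + c)) (gaussianReal m v) ↔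
      Integrable f (gaussianReal (s * m + c) (.mk (s ^ 2) (sq_nonneg s) * v)) := by
  rw [← map_affine_gaussianReal,
    integrable_map_measure hf.aestronglyMeasurable (by fun_prop)]
  rfl

lemma integral_comp_affine_gaussianReal (hf : Measurable f) :
    ∫ x, f (s * x + c) ∂(gaussianReal m v) =
      ∫ x, f x ∂(gaussianReal (s * m + c) (.mk (s ^ 2) (sq_nonneg s) * v)) := by
  rw [← map_affine_gaussianReal, integral_map (by fun_prop) hf.aestronglyMeasurable]

lemma integral_gaussianReal_eq_integral_add (hf : Measurable f) :
    ∫ x, f x ∂(gaussianReal m v) = ∫ x, f (m + x) ∂(gaussianReal 0 v) := by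
  rw [← zero_add m, ← gaussianReal_map_const_add m,
    integral_map (by fun_prop) hf.aestronglyMeasurable, zero_add]

lemma monotone_integral_gaussianReal (hf : Monotone f)
    (hint : ∀ m, Integrable f (gaussianReal m v)) :
    Monotone fun m => ∫ x, f x ∂(gaussianReal m v) := by
  have hshift (m : ℝ) : Integrable (fun x => f (m + x)) (gaussianReal 0 v) := by
    have h := hint (0 + m)
    rw [← gaussianReal_map_const_add m] at h
    exact h.comp_measurable (by fun_prop)
  intro m m' hm
  simp only [integral_gaussianReal_eq_integral_add hf.measurable]
  exact integral_mono (hshift m) (hshift m') fun x => hf (by gcongr)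

lemma integrable_integral_norm_gaussianReal {w : ℝ≥0} (hf : Measurable f)
    (hint : Integrable f (gaussianReal m (w + v))) :
    Integrable (fun a => ∫ x, ‖f x‖ ∂(gaussianReal a v)) (gaussianReal m w) := by
  rw [← add_zero m, ← gaussianReal_conv_gaussianReal] at hint
  simpa only [integral_gaussianReal_eq_integral_add hf.norm] using
    ((integrable_conv_iff hf.aestronglyMeasurable).1 hint).2

end Gaussian

/-- The change of utility, from unit wealth, caused by a jump of log-return `y` when the fraction
`φ` of wealth is invested in the risky asset; the paper's relative jump size `η` is `exp y - 1`. -/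
noncomputable def jumpGain (u : ℝ → ℝ) (φ y : ℝ) : ℝ := u (1 + φ * (exp y - 1)) - u 1

/-- The largest expected utility gain from a jump whose log-return has law `μ`, over the positions
`φ ∈ [0, 1]` that neither borrow nor sell short. The `sSup` is meaningful only when these
expectations are bounded above. -/
noncomputable def optimalJumpGain (u : ℝ → ℝ) (μ : Measure ℝ) : ℝ :=
  sSup ((fun φ => ∫ y, jumpGain u φ y ∂μ) '' Set.Icc 0 1)

section JumpGain

variable {u : ℝ → ℝ} {φ : ℝ} {μ : Measure ℝ}

@[simp]
lemma jumpGain_zero_left (u : ℝ → ℝ) (y : ℝ) : jumpGain u 0 y = 0 := by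
  simp [jumpGain]

@[simp]
lemma jumpGain_zero_right (u : ℝ → ℝ) (φ : ℝ) : jumpGain u φ 0 = 0 := by
  simp [jumpGain]

lemma jumpGain_one (u : ℝ → ℝ) (y : ℝ) : jumpGain u 1 y = u (exp y) - u 1 := by
  simp [jumpGain]

lemma one_add_mul_exp_sub_one_pos (hφ : φ ∈ Set.Icc (0 : ℝ) 1) (y : ℝ) :
    0 < 1 + φ * (exp y - 1) := by
  have hconvex : (1 - φ) • 1 + φ • exp y ∈ Set.Ioi (0 : ℝ) :=
    convex_Ioi 0 (Set.mem_Ioi.2 one_pos) (exp_pos y) (sub_nonneg.2 hφ.2) hφ.1 (sub_add_cancel 1 φ)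
  simp only [smul_eq_mul, Set.mem_Ioi] at hconvex
  linarith

lemma monotone_jumpGain (hu : MonotoneOn u (Set.Ioi 0)) (hφ : φ ∈ Set.Icc (0 : ℝ) 1) :
    Monotone (jumpGain u φ) := by
  intro y y' hy
  have hwealth : 1 + φ * (exp y - 1) ≤ 1 + φ * (exp y' - 1) := by
    have := hφ.1
    gcongr
  exact sub_le_sub_right (hu (one_add_mul_exp_sub_one_pos hφ y)
    (one_add_mul_exp_sub_one_pos hφ y') hwealth) _

lemma abs_jumpGain_le_abs_jumpGain_one (hu : MonotoneOn u (Set.Ioi 0))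
    (hφ : φ ∈ Set.Icc (0 : ℝ) 1) (y : ℝ) : |jumpGain u φ y| ≤ |jumpGain u 1 y| := by
  have hpos := one_add_mul_exp_sub_one_pos hφ y
  rcases le_total 0 y with hy | hy
  · have hgain : 0 ≤ jumpGain u φ y := by simpa using monotone_jumpGain hu hφ hy
    refine abs_le_abs_of_nonneg hgain ?_
    rw [jumpGain_one]
    refine sub_le_sub_right (hu hpos (exp_pos y) ?_) _
    nlinarith [hφ.2, one_le_exp hy]
  · have hgain : jumpGain u φ y ≤ 0 := by simpa using monotone_jumpGain hu hφ hy
    refine abs_le_abs_of_nonpos hgain ?_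
    rw [jumpGain_one]
    refine sub_le_sub_right (hu (exp_pos y) hpos ?_) _
    nlinarith [hφ.2, exp_le_one_iff.2 hy]

lemma integrable_jumpGain_one [IsFiniteMeasure μ] (hint : Integrable (fun y => u (exp y)) μ) :
    Integrable (jumpGain u 1) μ :=
  (hint.sub (integrable_const (u 1))).congr (ae_of_all _ fun y => (jumpGain_one u y).symm)

lemma integrable_jumpGain (hu : MonotoneOn u (Set.Ioi 0)) (hint : Integrable (jumpGain u 1) μ)
    (hφ : φ ∈ Set.Icc (0 : ℝ) 1) : Integrable (jumpGain u φ) μ :=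
  hint.mono (monotone_jumpGain hu hφ).measurable.aestronglyMeasurable
    (ae_of_all _ (abs_jumpGain_le_abs_jumpGain_one hu hφ))

lemma abs_integral_jumpGain_le (hu : MonotoneOn u (Set.Ioi 0))
    (hint : Integrable (jumpGain u 1) μ) (hφ : φ ∈ Set.Icc (0 : ℝ) 1) :
    |∫ y, jumpGain u φ y ∂μ| ≤ ∫ y, ‖jumpGain u 1 y‖ ∂μ :=
  norm_integral_le_of_norm_le (f := jumpGain u φ) hint.norm
    (ae_of_all _ (abs_jumpGain_le_abs_jumpGain_one hu hφ))

lemma bddAbove_integral_jumpGain (hu : MonotoneOn u (Set.Ioi 0))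
    (hint : Integrable (jumpGain u 1) μ) :
    BddAbove ((fun φ => ∫ y, jumpGain u φ y ∂μ) '' Set.Icc 0 1) :=
  ⟨∫ y, ‖jumpGain u 1 y‖ ∂μ, Set.forall_mem_image.2 fun _ hφ =>
    (le_abs_self _).trans (abs_integral_jumpGain_le hu hint hφ)⟩

lemma bddAbove_add_mul_integral_jumpGain (hu : MonotoneOn u (Set.Ioi 0))
    (hint : Integrable (jumpGain u 1) μ) {d : ℝ → ℝ} (hd : BddAbove (d '' Set.Icc 0 1)) (κ : ℝ) :
    BddAbove ((fun φ => d φ + κ * ∫ y, jumpGain u φ y ∂μ) '' Set.Icc 0 1) := by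
  obtain ⟨D, hD⟩ := hd
  refine ⟨D + |κ| * ∫ y, ‖jumpGain u 1 y‖ ∂μ, Set.forall_mem_image.2 fun φ hφ => ?_⟩
  refine add_le_add (hD (Set.mem_image_of_mem d hφ)) ((le_abs_self _).trans ?_)
  rw [abs_mul]
  gcongr
  exact abs_integral_jumpGain_le hu hint hφ

lemma optimalJumpGain_nonneg (hu : MonotoneOn u (Set.Ioi 0))
    (hint : Integrable (jumpGain u 1) μ) : 0 ≤ optimalJumpGain u μ :=
  le_csSup (bddAbove_integral_jumpGain hu hint) ⟨0, by simp⟩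

lemma optimalJumpGain_le (hu : MonotoneOn u (Set.Ioi 0)) (hint : Integrable (jumpGain u 1) μ) :
    optimalJumpGain u μ ≤ ∫ y, ‖jumpGain u 1 y‖ ∂μ :=
  csSup_le ((Set.nonempty_Icc.2 zero_le_one).image _) <| Set.forall_mem_image.2 fun _ hφ =>
    (le_abs_self _).trans (abs_integral_jumpGain_le hu hint hφ)

end JumpGain

section GaussianJumps

variable {u : ℝ → ℝ} {v : ℝ≥0}

lemma integrable_jumpGain_comp_affine {m s c φ : ℝ} (hu : MonotoneOn u (Set.Ioi 0))
    (hint : Integrable (jumpGain u 1)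
      (gaussianReal (s * m + c) (.mk (s ^ 2) (sq_nonneg s) * v)))
    (hφ : φ ∈ Set.Icc (0 : ℝ) 1) :
    Integrable (fun x => jumpGain u φ (s * x + c)) (gaussianReal m v) :=
  (integrable_comp_affine_gaussianReal_iff (monotone_jumpGain hu hφ).measurable).2
    (integrable_jumpGain hu hint hφ)

lemma image_integral_jumpGain_comp_affine {β : Type*} {m s c : ℝ}
    (hu : MonotoneOn u (Set.Ioi 0)) (g : ℝ → ℝ → β) :
    (fun φ => g φ (∫ x, jumpGain u φ (s * x + c) ∂(gaussianReal m v))) '' Set.Icc 0 1 =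
      (fun φ => g φ (∫ x, jumpGain u φ x
        ∂(gaussianReal (s * m + c) (.mk (s ^ 2) (sq_nonneg s) * v)))) '' Set.Icc 0 1 :=
  Set.image_congr fun φ hφ => congrArg (g φ)
    (integral_comp_affine_gaussianReal (monotone_jumpGain hu hφ).measurable)

lemma monotone_optimalJumpGain_gaussianReal (hu : MonotoneOn u (Set.Ioi 0))
    (hint : ∀ m, Integrable (jumpGain u 1) (gaussianReal m v)) :
    Monotone fun m => optimalJumpGain u (gaussianReal m v) := by
  intro m m' hm
  refine csSup_le ((Set.nonempty_Icc.2 zero_le_one).image _) (Set.forall_mem_image.2 fun φ hφ => ?_)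
  have hmean := monotone_integral_gaussianReal (monotone_jumpGain hu hφ)
    (fun a => integrable_jumpGain hu (hint a) hφ) hm
  exact hmean.trans
    (le_csSup (bddAbove_integral_jumpGain hu (hint m')) (Set.mem_image_of_mem _ hφ))

lemma integrable_optimalJumpGain_gaussianReal (hu : MonotoneOn u (Set.Ioi 0))
    (hint : ∀ m w, Integrable (jumpGain u 1) (gaussianReal m w)) (m : ℝ) (w : ℝ≥0) :
    Integrable (fun a => optimalJumpGain u (gaussianReal a v)) (gaussianReal m w) := by
  have hbound := integrable_integral_norm_gaussianReal (v := v)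
    (monotone_jumpGain hu (Set.right_mem_Icc.2 zero_le_one)).measurable (hint m (w + v))
  have hmono := monotone_optimalJumpGain_gaussianReal hu fun a => hint a v
  refine hbound.mono' hmono.measurable.aestronglyMeasurable (ae_of_all _ fun a => ?_)
  rw [Real.norm_of_nonneg (optimalJumpGain_nonneg hu (hint a v))]
  exact optimalJumpGain_le hu (hint a v)

end GaussianJumps

lemma monotoneOn_U {α : ℝ} (hα : α ≠ 1) : MonotoneOn (U α) (Set.Ioi 0) := by
  intro x hx y _ hxy
  rcases hα.lt_or_gt with hα | hα
  · exact div_le_div_of_nonneg_right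
      (rpow_le_rpow (le_of_lt hx) hxy (by linarith)) (by linarith)
  · exact div_le_div_of_nonpos_of_le (by linarith)
      (rpow_le_rpow_of_nonpos hx hxy (by linarith))

lemma integrable_U_exp_gaussianReal (α m : ℝ) (v : ℝ≥0) :
    Integrable (fun y => U α (exp y)) (gaussianReal m v) := by
  have hexp (y : ℝ) : U α (exp y) = exp ((1 - α) * y) / (1 - α) := by
    rw [U, ← exp_mul, mul_comm]
  simpa only [hexp] using (integrable_exp_mul_gaussianReal (1 - α)).div_const (1 - α)

theorem growth_rate_constant_finite_general {u d : ℝ → ℝ} (hu : MonotoneOn u (Set.Ioi 0))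
    (hint : ∀ m v, Integrable (fun y => u (exp y)) (gaussianReal m v))
    (hd : BddAbove (d '' Set.Icc 0 1)) (κ s c b : ℝ) (v : ℝ≥0) :
    (∀ φ ∈ Set.Icc (0 : ℝ) 1,
        Integrable (fun x => jumpGain u φ (s * x + c)) (gaussianReal 0 1)) ∧
    BddAbove ((fun φ => d φ + κ * ∫ x, jumpGain u φ (s * x + c) ∂(gaussianReal 0 1))
        '' Set.Icc (0 : ℝ) 1) ∧
    (∀ z : ℝ, ∀ φ ∈ Set.Icc (0 : ℝ) 1,
        Integrable (fun y => jumpGain u φ (s * y + c)) (gaussianReal (b * z) v)) ∧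
    (∀ z : ℝ, BddAbove ((fun φ => ∫ y, jumpGain u φ (s * y + c) ∂(gaussianReal (b * z) v))
        '' Set.Icc (0 : ℝ) 1)) ∧
    Integrable (fun z => sSup ((fun φ =>
        ∫ y, jumpGain u φ (s * y + c) ∂(gaussianReal (b * z) v)) '' Set.Icc (0 : ℝ) 1))
      (gaussianReal 0 1) := by
  have hgain (m : ℝ) (w : ℝ≥0) : Integrable (jumpGain u 1) (gaussianReal m w) :=
    integrable_jumpGain_one (hint m w)
  have hintegrable {φ : ℝ} (hφ : φ ∈ Set.Icc (0 : ℝ) 1) (m : ℝ) (w : ℝ≥0) :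
      Integrable (fun x => jumpGain u φ (s * x + c)) (gaussianReal m w) :=
    integrable_jumpGain_comp_affine hu (hgain _ _) hφ
  refine ⟨fun φ hφ => hintegrable hφ 0 1, ?_, fun z φ hφ => hintegrable hφ (b * z) v,
    fun z => ?_, ?_⟩
  · rw [image_integral_jumpGain_comp_affine hu fun φ I => d φ + κ * I]
    exact bddAbove_add_mul_integral_jumpGain hu (hgain _ _) hd κ
  · rw [image_integral_jumpGain_comp_affine hu fun _ I => I]
    exact bddAbove_integral_jumpGain hu (hgain _ _)
  · simp only [image_integral_jumpGain_comp_affine hu fun _ I => I, ← mul_assoc]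
    exact (integrable_comp_affine_gaussianReal_iff
      (monotone_optimalJumpGain_gaussianReal hu fun a => hgain a _).measurable).2
      (integrable_optimalJumpGain_gaussianReal hu hgain _ _)

/-- In the Gaussian case study, the certainty-equivalent growth rate constant
`M = sup_{φ∈[0,1]} {φ(μd-r) - ½αφ²σ² + λ(1-p)∫(U(1+φη)-U(1))dN(0,1)}`
`    + λp ∫ [sup_{φ∈[0,1]} ∫(U(1+φη)-U(1))dN(ρz,1-ρ²)] dN(0,1)(z)`
is a finite real number: all integrands are integrable, the suprema are over
nonempty sets that are bounded above, and the signal-optimal value is integrable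
with respect to the signal distribution. -/
theorem growth_rate_constant_finite
    (α : ℝ) (hα : α ∈ Set.Ioo (0 : ℝ) 1)
    (r μd σ σh μh lam p ρ c : ℝ)
    (hσ : 0 < σ) (hσh : 0 < σh) (hlam : 0 < lam)
    (hp : p ∈ Set.Icc (0 : ℝ) 1) (hρ : ρ ∈ Set.Ioo (-1 : ℝ) 1)
    (hc : c = μh - σh ^ 2 / 2)
    (η : ℝ → ℝ) (hη : η = fun x => Real.exp (σh * x + c) - 1)
    (M : ℝ)
    (hM : M = sSup ((fun φ => φ * (μd - r) - (1 / 2) * α * φ ^ 2 * σ ^ 2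
          + lam * (1 - p) * ∫ x, (U α (1 + φ * η x) - U α 1) ∂(gaussianReal 0 1))
            '' Set.Icc (0 : ℝ) 1)
        + lam * p * ∫ z, sSup ((fun φ =>
            ∫ y, (U α (1 + φ * η y) - U α 1)
              ∂(gaussianReal (ρ * z) (Real.toNNReal (1 - ρ ^ 2)))) '' Set.Icc (0 : ℝ) 1)
          ∂(gaussianReal 0 1)) :
    (∀ φ ∈ Set.Icc (0 : ℝ) 1,
        Integrable (fun x => U α (1 + φ * η x) - U α 1) (gaussianReal 0 1)) ∧
    BddAbove ((fun φ => φ * (μd - r) - (1 / 2) * α * φ ^ 2 * σ ^ 2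
        + lam * (1 - p) * ∫ x, (U α (1 + φ * η x) - U α 1) ∂(gaussianReal 0 1))
          '' Set.Icc (0 : ℝ) 1) ∧
    (∀ z : ℝ, ∀ φ ∈ Set.Icc (0 : ℝ) 1,
        Integrable (fun y => U α (1 + φ * η y) - U α 1)
          (gaussianReal (ρ * z) (Real.toNNReal (1 - ρ ^ 2)))) ∧
    (∀ z : ℝ, BddAbove ((fun φ =>
        ∫ y, (U α (1 + φ * η y) - U α 1)
          ∂(gaussianReal (ρ * z) (Real.toNNReal (1 - ρ ^ 2)))) '' Set.Icc (0 : ℝ) 1)) ∧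
    Integrable (fun z => sSup ((fun φ =>
        ∫ y, (U α (1 + φ * η y) - U α 1)
          ∂(gaussianReal (ρ * z) (Real.toNNReal (1 - ρ ^ 2)))) '' Set.Icc (0 : ℝ) 1))
      (gaussianReal 0 1) := by
  subst hη
  have hd : BddAbove ((fun φ => φ * (μd - r) - (1 / 2) * α * φ ^ 2 * σ ^ 2) '' Set.Icc (0 : ℝ) 1) :=
    isCompact_Icc.bddAbove_image (by fun_prop)
  exact growth_rate_constant_finite_general (monotoneOn_U hα.2.ne)
    (integrable_U_exp_gaussianReal α) hd (lam * (1 - p)) σh c ρ (Real.toNNReal (1 - ρ ^ 2))
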